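/- arXiv:0903.4637 — 2 statements merged into one kernel-verified Lean document; each statement's English description precedes it below -/
import Mathlib

section
/- Let C be a convex body of minimal width w > 0 in E^d, and let P_1, ..., P_n be planks of widths w_1, ..., w_n > 0 with w_0 := w_1 + ... + w_n < w. Then there exists a set Q ⊆ E^d which is the intersection of at most 2^n translates of C, has minimal width w(Q) ≥ w − w_0, and satisfies vol_d(C \ (P_1 ∪ ... ∪ P_n)) ≥ vol_d(Q); in particular vol_d((P_1 ∪ ... ∪ P_n) ∩ C) ≤ vol_d(C) − vol_d(Q). -/
open MeasureTheory
open scoped RealInnerProductSpace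

/-- The width of a set `C` in direction `u`. -/
noncomputable def dirWidth {d : ℕ} (C : Set (EuclideanSpace ℝ (Fin d)))
    (u : EuclideanSpace ℝ (Fin d)) : ℝ :=
  sSup ((fun x => ⟪x, u⟫) '' C) - sInf ((fun x => ⟪x, u⟫) '' C)

/-- The minimal width of a set `C`: the infimum of the widths over all unit directions. -/
noncomputable def minWidth {d : ℕ} (C : Set (EuclideanSpace ℝ (Fin d))) : ℝ :=
  ⨅ u : {v : EuclideanSpace ℝ (Fin d) // ‖v‖ = 1}, dirWidth C u

/-- `P` is a plank of width `w`. -/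
def IsPlank {d : ℕ} (P : Set (EuclideanSpace ℝ (Fin d))) (w : ℝ) : Prop :=
  0 < w ∧ ∃ (u c : EuclideanSpace ℝ (Fin d)), ‖u‖ = 1 ∧
    P = {x | |⟪x - c, u⟫| ≤ w / 2}

/-- The sign attached to a Boolean. -/
noncomputable def bangSign (b : Bool) : ℝ := if b then 1 else -1

theorem bangSign_not (b : Bool) : bangSign (!b) = - bangSign b := by
  cases b <;> simp [bangSign]

theorem bangSign_sq (b : Bool) : bangSign b * bangSign b = 1 := by
  cases b <;> simp [bangSign]

theorem bang_sum_update {n : ℕ} {M : Type*} [AddCommGroup M] [Module ℝ M]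
    (v : Fin n → M) (e : Fin n → Bool) (i : Fin n) :
    ∑ j, bangSign (Function.update e i (!e i) j) • v j
      = ∑ j, bangSign (e j) • v j - (2 * bangSign (e i)) • v i := by
  rw [sub_eq_add_neg, ← sub_eq_iff_eq_add', ← Finset.sum_sub_distrib,
    Finset.sum_eq_single i]
  · rw [Function.update_self, bangSign_not]
    module
  · intro j _ hj
    rw [Function.update_of_ne hj, sub_self]
  · simp

/-- Bang's lemma on signs. -/
theorem bang_signs {n : ℕ} {E : Type*} [NormedAddCommGroup E] [InnerProductSpace ℝ E]
    (v c : Fin n → E) (x : E) :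
    ∃ e : Fin n → Bool, ∀ i, ⟪v i, v i⟫ ≤
      bangSign (e i) * ⟪x + ∑ j, bangSign (e j) • v j - c i, v i⟫ := by
  obtain ⟨e, he⟩ := Finite.exists_max (fun e : Fin n → Bool =>
    ⟪x + ∑ j, bangSign (e j) • v j, x + ∑ j, bangSign (e j) • v j⟫
      - 2 * ∑ j, bangSign (e j) • ⟪c j, v j⟫)
  refine ⟨e, fun i => ?_⟩
  have h := he (Function.update e i (!e i))
  simp only [bang_sum_update] at h
  set S := ∑ j, bangSign (e j) • v j
  have hy : x + (S - (2 * bangSign (e i)) • v i) = (x + S) - (2 * bangSign (e i)) • v i := by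
    abel
  rw [hy] at h
  generalize x + S = y at h ⊢
  have hs := bangSign_sq (e i)
  rw [inner_sub_left, inner_sub_right, inner_sub_right, inner_smul_left, inner_smul_left,
    inner_smul_right, inner_smul_right, real_inner_comm y (v i)] at h
  simp only [smul_eq_mul, RCLike.conj_to_real] at h
  rw [inner_sub_left]
  rw [show ⟪y, v i⟫ = ⟪v i, y⟫ from real_inner_comm _ _] at *
  generalize bangSign (e i) = σ at *
  have : 2 * σ * (2 * σ * ⟪v i, v i⟫) = 4 * ⟪v i, v i⟫ := by linear_combination 4 * ⟪v i, v i⟫ * hs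
  nlinarith

section
variable {d : ℕ}

theorem bang_img_bdd {C : Set (EuclideanSpace ℝ (Fin d))} (hC : IsCompact C)
    (u : EuclideanSpace ℝ (Fin d)) :
    BddAbove ((fun x => ⟪x, u⟫) '' C) ∧ BddBelow ((fun x => ⟪x, u⟫) '' C) := by
  have : IsCompact ((fun x : EuclideanSpace ℝ (Fin d) => ⟪x, u⟫) '' C) :=
    hC.image (by fun_prop)
  exact ⟨this.bddAbove, this.bddBelow⟩

theorem bang_minWidth_le {C : Set (EuclideanSpace ℝ (Fin d))} (hC : IsCompact C)
    (u : EuclideanSpace ℝ (Fin d)) (hu : ‖u‖ = 1) : minWidth C ≤ dirWidth C u := by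
  unfold minWidth
  refine ciInf_le (f := fun u : {v : EuclideanSpace ℝ (Fin d) // ‖v‖ = 1} => dirWidth C u)
    ⟨0, ?_⟩ ⟨u, hu⟩
  rintro _ ⟨v, rfl⟩
  have h := bang_img_bdd hC v.1
  exact sub_nonneg.2 (Real.sInf_le_sSup _ h.2 h.1)

/-- A convex body contains a chord of length `minWidth C` in every direction. -/
theorem bang_chord {C : Set (EuclideanSpace ℝ (Fin d))} (hC : IsCompact C)
    (hconv : Convex ℝ C) (hne : C.Nonempty) (hpos : 0 < minWidth C)
    (u : EuclideanSpace ℝ (Fin d)) (hu : ‖u‖ = 1) :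
    ∃ a ∈ C, ∃ b ∈ C, b - a = minWidth C • u := by
  by_contra hcon
  have hK : IsCompact ((fun p : EuclideanSpace ℝ (Fin d) × EuclideanSpace ℝ (Fin d) =>
      p.2 - p.1) '' (C ×ˢ C)) := (hC.prod hC).image (by fun_prop)
  have hKc : Convex ℝ ((fun p : EuclideanSpace ℝ (Fin d) × EuclideanSpace ℝ (Fin d) =>
      p.2 - p.1) '' (C ×ˢ C)) :=
    (hconv.prod hconv).is_linear_image
      (f := fun p : EuclideanSpace ℝ (Fin d) × EuclideanSpace ℝ (Fin d) => p.2 - p.1)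
      ⟨fun p q => by simp; abel, fun r p => by simp [smul_sub]⟩
  have hnot : minWidth C • u ∉ ((fun p : EuclideanSpace ℝ (Fin d) × EuclideanSpace ℝ (Fin d) =>
      p.2 - p.1) '' (C ×ˢ C)) := by
    rintro ⟨⟨a, b⟩, ⟨ha, hb⟩, h⟩
    exact hcon ⟨a, ha, b, hb, h⟩
  obtain ⟨f, r, hf1, hf2⟩ := geometric_hahn_banach_closed_point hKc hK.isClosed hnot
  obtain ⟨z, rfl⟩ := (InnerProductSpace.toDual ℝ (EuclideanSpace ℝ (Fin d))).surjective f
  simp only [InnerProductSpace.toDual_apply_apply] at hf1 hf2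
  obtain ⟨p, hp⟩ := hne
  have h0 : 0 < r := by
    have := hf1 0 ⟨(p, p), ⟨hp, hp⟩, by simp⟩
    simpa using this
  have hz : 0 < ‖z‖ := by
    rw [norm_pos_iff]
    rintro rfl
    simp at hf2
    linarith
  have hcs : ⟪z, minWidth C • u⟫ ≤ ‖z‖ * minWidth C := by
    refine (real_inner_le_norm _ _).trans ?_
    rw [norm_smul, hu, Real.norm_of_nonneg hpos.le, mul_one]
  have hwz := bang_minWidth_le hC (‖z‖⁻¹ • z) (by
    rw [norm_smul, norm_inv, norm_norm, inv_mul_cancel₀ hz.ne'])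
  obtain ⟨a, ha, ha'⟩ := hC.exists_isMinOn ⟨p, hp⟩
    (f := fun x => ⟪x, ‖z‖⁻¹ • z⟫) (by fun_prop)
  obtain ⟨b, hb, hb'⟩ := hC.exists_isMaxOn ⟨p, hp⟩
    (f := fun x => ⟪x, ‖z‖⁻¹ • z⟫) (by fun_prop)
  have hd : dirWidth C (‖z‖⁻¹ • z) ≤ ⟪b, ‖z‖⁻¹ • z⟫ - ⟪a, ‖z‖⁻¹ • z⟫ := by
    unfold dirWidth
    refine sub_le_sub (csSup_le ⟨_, p, hp, rfl⟩ ?_) (le_csInf ⟨_, p, hp, rfl⟩ ?_)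
    · rintro _ ⟨x, hx, rfl⟩
      exact hb' hx
    · rintro _ ⟨x, hx, rfl⟩
      exact ha' hx
  have hab := hf1 (b - a) ⟨(a, b), ⟨ha, hb⟩, rfl⟩
  have he : ⟪b, ‖z‖⁻¹ • z⟫ - ⟪a, ‖z‖⁻¹ • z⟫ = ‖z‖⁻¹ * ⟪z, b - a⟫ := by
    rw [← inner_sub_left, inner_smul_right, real_inner_comm]
  have h3 : minWidth C ≤ ‖z‖⁻¹ * ⟪z, b - a⟫ := by linarith
  have h4 : ‖z‖ * minWidth C ≤ ⟪z, b - a⟫ := by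
    have := mul_le_mul_of_nonneg_left h3 hz.le
    rwa [← mul_assoc, mul_inv_cancel₀ hz.ne', one_mul] at this
  linarith

theorem bang_homothet_width {C Q : Set (EuclideanSpace ℝ (Fin d))} (hC : IsCompact C)
    (hne : C.Nonempty) (hQ : IsCompact Q) (ρ : ℝ) (hρ : 0 < ρ) (q : EuclideanSpace ℝ (Fin d))
    (hsub : ∀ x ∈ C, ρ • x + q ∈ Q) (hpos : 0 < minWidth C) :
    ρ * minWidth C ≤ minWidth Q := by
  have : Nonempty {v : EuclideanSpace ℝ (Fin d) // ‖v‖ = 1} := by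
    by_contra h
    rw [not_nonempty_iff] at h
    unfold minWidth at hpos
    rw [Real.iInf_of_isEmpty] at hpos
    exact lt_irrefl _ hpos
  refine le_ciInf fun ⟨u, hu⟩ => ?_
  refine (mul_le_mul_of_nonneg_left (bang_minWidth_le hC u hu) hρ.le).trans ?_
  obtain ⟨p, hp⟩ := hne
  have hb := bang_img_bdd hQ u
  have h1 : sSup ((fun x => ⟪x, u⟫) '' C) ≤
      ρ⁻¹ * (sSup ((fun x => ⟪x, u⟫) '' Q) - ⟪q, u⟫) := by
    refine csSup_le ⟨_, p, hp, rfl⟩ ?_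
    rintro _ ⟨x, hx, rfl⟩
    have := le_csSup hb.1 ⟨_, hsub x hx, rfl⟩
    simp only [inner_add_left, inner_smul_left, RCLike.conj_to_real] at this
    rw [le_inv_mul_iff₀ hρ]
    linarith
  have h2 : ρ⁻¹ * (sInf ((fun x => ⟪x, u⟫) '' Q) - ⟪q, u⟫) ≤
      sInf ((fun x => ⟪x, u⟫) '' C) := by
    refine le_csInf ⟨_, p, hp, rfl⟩ ?_
    rintro _ ⟨x, hx, rfl⟩
    have := csInf_le hb.2 ⟨_, hsub x hx, rfl⟩
    simp only [inner_add_left, inner_smul_left, RCLike.conj_to_real] at this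
    rw [inv_mul_le_iff₀ hρ]
    linarith
  rw [le_inv_mul_iff₀ hρ] at h1
  rw [inv_mul_le_iff₀ hρ] at h2
  unfold dirWidth
  linarith

theorem bang_hyperplane_null (u : EuclideanSpace ℝ (Fin d)) (hu : ‖u‖ = 1) (r : ℝ) :
    volume {x : EuclideanSpace ℝ (Fin d) | ⟪x, u⟫ = r} = 0 := by
  have hz : volume ((LinearMap.ker (innerSL ℝ u).toLinearMap : Submodule ℝ (EuclideanSpace ℝ (Fin d))) :
      Set (EuclideanSpace ℝ (Fin d))) = 0 := by
    apply Measure.addHaar_submodule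
    intro h
    have : u ∈ LinearMap.ker (innerSL ℝ u).toLinearMap := h ▸ Submodule.mem_top
    have h2 : ⟪u, u⟫ = 0 := this
    rw [real_inner_self_eq_norm_sq, hu] at h2
    norm_num at h2
  rw [← measure_preimage_add_right volume (-(r • u))] at hz
  convert hz using 2
  ext x
  have : ⟪u, u⟫ = 1 := by rw [real_inner_self_eq_norm_sq, hu]; norm_num
  simp only [Set.mem_setOf_eq, Set.mem_preimage, SetLike.mem_coe, LinearMap.mem_ker]
  change _ ↔ ⟪u, x + -(r • u)⟫ = 0
  rw [inner_add_right, inner_neg_right, inner_smul_right, this, real_inner_comm]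
  constructor <;> intro h <;> linarith

end

theorem bang_volume {d n : ℕ} (C Q : Set (EuclideanSpace ℝ (Fin d))) (hC : IsCompact C)
    (u c : Fin n → EuclideanSpace ℝ (Fin d)) (hu : ∀ i, ‖u i‖ = 1) (wi : Fin n → ℝ)
    (hwi : ∀ i, 0 < wi i)
    (hQ : ∀ x ∈ Q, ∀ e : Fin n → Bool, x + ∑ j, bangSign (e j) • (wi j / 2) • u j ∈ C) :
    volume Q ≤ volume (C \ ⋃ i, {x | |⟪x - c i, u i⟫| ≤ wi i / 2}) := by
  set S : (Fin n → Bool) → EuclideanSpace ℝ (Fin d) :=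
    fun e => ∑ j, bangSign (e j) • (wi j / 2) • u j with hS
  set A : (Fin n → Bool) → Set (EuclideanSpace ℝ (Fin d)) := fun e =>
    C ∩ ⋂ i, {y | wi i / 2 < bangSign (e i) * ⟪y - c i, u i⟫} with hA
  set H : (Fin n → Bool) → Fin n → Set (EuclideanSpace ℝ (Fin d)) := fun e i =>
    {y | ⟪y, u i⟫ = ⟪c i, u i⟫ + bangSign (e i) * (wi i / 2)} with hH
  have hAm : ∀ e, MeasurableSet (A e) := fun e =>
    hC.measurableSet.inter (MeasurableSet.iInter fun i =>
      (isOpen_lt (by fun_prop) (by fun_prop)).measurableSet)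
  have hcov : Q ⊆ ⋃ e, (fun x => x + S e) ⁻¹' (A e ∪ ⋃ i, H e i) := by
    intro x hx
    obtain ⟨e, he⟩ := bang_signs (fun i => (wi i / 2) • u i) c x
    rw [Set.mem_iUnion]
    refine ⟨e, ?_⟩
    have hge : ∀ i, wi i / 2 ≤ bangSign (e i) * ⟪x + S e - c i, u i⟫ := by
      intro i
      have h := he i
      have h1 : ⟪u i, u i⟫ = 1 := by rw [real_inner_self_eq_norm_sq, hu]; norm_num
      have hpos : 0 < wi i / 2 := by linarith [hwi i]
      simp only [inner_smul_left, inner_smul_right, RCLike.conj_to_real, h1] at h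
      refine le_of_mul_le_mul_left ?_ hpos
      linarith
    by_cases hall : ∀ i, wi i / 2 < bangSign (e i) * ⟪x + S e - c i, u i⟫
    · exact Or.inl ⟨hQ x hx e, Set.mem_iInter.2 hall⟩
    · push Not at hall
      obtain ⟨i, hi⟩ := hall
      refine Or.inr (Set.mem_iUnion.2 ⟨i, ?_⟩)
      have heq := le_antisymm hi (hge i)
      change ⟪x + S e, u i⟫ = ⟪c i, u i⟫ + bangSign (e i) * (wi i / 2)
      rw [← heq, ← mul_assoc, bangSign_sq, inner_sub_left]
      ring
  have hdisj : Pairwise (Function.onFun Disjoint A) := by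
    intro e e' hne
    obtain ⟨i, hi⟩ := Function.ne_iff.1 hne
    rw [Function.onFun, Set.disjoint_left]
    rintro y ⟨_, h1⟩ ⟨_, h2⟩
    have h1 : wi i / 2 < bangSign (e i) * ⟪y - c i, u i⟫ := Set.mem_iInter.1 h1 i
    have h2 : wi i / 2 < bangSign (e' i) * ⟪y - c i, u i⟫ := Set.mem_iInter.1 h2 i
    have h3 : e' i = !e i := by
      cases h : e i <;> cases h' : e' i <;> simp_all
    rw [h3, bangSign_not] at h2
    linarith [hwi i]
  have hsub : (⋃ e, A e) ⊆ C \ ⋃ i, {x | |⟪x - c i, u i⟫| ≤ wi i / 2} := by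
    intro y hy
    obtain ⟨e, hyC, hy⟩ := Set.mem_iUnion.1 hy
    refine ⟨hyC, fun h => ?_⟩
    obtain ⟨i, hi⟩ := Set.mem_iUnion.1 h
    have h1 : wi i / 2 < bangSign (e i) * ⟪y - c i, u i⟫ := Set.mem_iInter.1 hy i
    have hi : |⟪y - c i, u i⟫| ≤ wi i / 2 := hi
    rw [abs_le] at hi
    cases h : e i <;> simp [h, bangSign] at h1 <;> linarith
  calc volume Q ≤ volume (⋃ e, (fun x => x + S e) ⁻¹' (A e ∪ ⋃ i, H e i)) := measure_mono hcov
    _ ≤ ∑ e, volume ((fun x => x + S e) ⁻¹' (A e ∪ ⋃ i, H e i)) :=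
        measure_iUnion_fintype_le _ _
    _ ≤ ∑ e, volume (A e) := by
        refine Finset.sum_le_sum fun e _ => ?_
        rw [measure_preimage_add_right]
        refine (measure_union_le _ _).trans ?_
        rw [measure_iUnion_null fun i => bang_hyperplane_null (u i) (hu i) _, add_zero]
    _ = volume (⋃ e, A e) := by
        rw [measure_iUnion hdisj hAm, tsum_fintype]
    _ ≤ _ := measure_mono hsub

/-- **Bang's partial covering estimate.** If `C` is a convex body of minimal width `w > 0`
and `P₁, …, Pₙ` are planks of widths `w₁, …, wₙ` with `w₀ = w₁ + ⋯ + wₙ < w`, then there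
is a set `Q`, an intersection of at most `2^n` translates of `C`, of minimal width at
least `w − w₀`, with `vol(C \ (P₁ ∪ ⋯ ∪ Pₙ)) ≥ vol(Q)`; in particular
`vol((P₁ ∪ ⋯ ∪ Pₙ) ∩ C) ≤ vol(C) − vol(Q)`. -/
theorem bang_partial_covering {d n : ℕ} (C : Set (EuclideanSpace ℝ (Fin d)))
    (hC : IsCompact C) (hCconv : Convex ℝ C) (hCint : (interior C).Nonempty)
    (w : ℝ) (hw : minWidth C = w) (hwpos : 0 < w)
    (P : Fin n → Set (EuclideanSpace ℝ (Fin d))) (wi : Fin n → ℝ)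
    (hP : ∀ i, IsPlank (P i) (wi i)) (hsum : ∑ i, wi i < w) :
    ∃ Q : Set (EuclideanSpace ℝ (Fin d)),
      (∃ s : Finset (EuclideanSpace ℝ (Fin d)), s.Nonempty ∧ s.card ≤ 2 ^ n ∧
        Q = ⋂ t ∈ s, (fun x => t + x) '' C) ∧
      w - ∑ i, wi i ≤ minWidth Q ∧
      volume Q ≤ volume (C \ ⋃ i, P i) ∧
      volume ((⋃ i, P i) ∩ C) ≤ volume C - volume Q := by
  subst hw
  have hne : C.Nonempty := hCint.mono interior_subset
  choose hwi u c hu hPe using hP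
  have hPeq : P = fun i => {x | |⟪x - c i, u i⟫| ≤ wi i / 2} := funext hPe
  subst hPeq
  choose a ha b hb hab using fun i => bang_chord hC hCconv hne hwpos (u i) (hu i)
  classical
  set S : (Fin n → Bool) → EuclideanSpace ℝ (Fin d) :=
    fun e => ∑ j, bangSign (e j) • (wi j / 2) • u j with hS
  set s : Finset (EuclideanSpace ℝ (Fin d)) := Finset.univ.image (fun e => - S e) with hs
  set Q : Set (EuclideanSpace ℝ (Fin d)) := ⋂ t ∈ s, (fun x => t + x) '' C with hQdef
  have hmem : ∀ x, x ∈ Q ↔ ∀ e, x + S e ∈ C := by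
    intro x
    simp only [hQdef, hs, Set.mem_iInter, Finset.mem_image, Finset.mem_univ, true_and,
      forall_exists_index, forall_apply_eq_imp_iff, Set.mem_image]
    refine forall_congr' fun e => ⟨?_, fun h => ⟨_, h, by abel⟩⟩
    rintro ⟨y, hy, rfl⟩
    simpa [add_comm] using hy
  have hsne : s.Nonempty := Finset.univ_nonempty.image _
  have hQc : IsCompact Q := by
    have hcl : ∀ t : EuclideanSpace ℝ (Fin d), IsCompact ((fun x => t + x) '' C) :=
      fun t => hC.image (by fun_prop)
    obtain ⟨t, ht⟩ := hsne
    exact (hcl t).of_isClosed_subset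
      (isClosed_biInter fun t _ => (hcl t).isClosed) (Set.biInter_subset_of_mem ht)
  set W := minWidth C with hW
  have hvol := bang_volume C Q hC u c hu wi hwi fun x hx => (hmem x).1 hx
  refine ⟨Q, ⟨s, hsne, ?_, rfl⟩, ?_, hvol, ?_⟩
  · refine Finset.card_image_le.trans ?_
    simp
  · have hρ : 0 < 1 - (∑ i, wi i) / W := by
      rw [sub_pos, div_lt_one hwpos]
      exact hsum
    have key := bang_homothet_width hC hne hQc (1 - (∑ i, wi i) / W) hρ
      (∑ i, (wi i / W) • ((1 / 2 : ℝ) • (a i + b i))) ?_ hwpos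
    · convert key using 1
      rw [← hW]
      field_simp
    · intro x hx
      rw [hmem]
      intro e
      set z : Fin n → EuclideanSpace ℝ (Fin d) := fun i => if e i then b i else a i with hz
      have hzC : ∀ i, z i ∈ C := by
        intro i
        simp only [hz]
        split_ifs
        exacts [hb i, ha i]
      have hterm : ∀ i, (wi i / W) • ((1 / 2 : ℝ) • (a i + b i)) +
          bangSign (e i) • (wi i / 2) • u i = (wi i / W) • z i := by
        intro i
        have hui : u i = W⁻¹ • (b i - a i) := by
          rw [hab i, smul_smul, inv_mul_cancel₀ hwpos.ne', one_smul]
        rw [hui]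
        cases h : e i <;> simp only [hz, h, bangSign, if_true, Bool.false_eq_true, if_false] <;>
          module
      rw [add_assoc, hS]
      simp only
      rw [← Finset.sum_add_distrib, Finset.sum_congr rfl fun i _ => hterm i]
      have := hCconv.sum_mem (t := (Finset.univ : Finset (Option (Fin n))))
        (w := fun o => o.elim (1 - (∑ i, wi i) / W) (fun i => wi i / W))
        (z := fun o => o.elim x z) ?_ ?_ ?_
      · simpa [Fintype.sum_option] using this
      · rintro (_ | i) _
        · exact hρ.le
        · exact (div_pos (hwi i) hwpos).le
      · simp [Fintype.sum_option, Finset.sum_div]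
      · rintro (_ | i) _
        · exact hx
        · exact hzC i
  · have hfin : volume C ≠ ⊤ := hC.measure_lt_top.ne
    have hm : MeasurableSet (⋃ i, {x : EuclideanSpace ℝ (Fin d) |
        |⟪x - c i, u i⟫| ≤ wi i / 2}) :=
      MeasurableSet.iUnion fun i => (isClosed_le (by fun_prop) (by fun_prop)).measurableSet
    have hsplit := measure_inter_add_sdiff (μ := volume) C hm
    have hQfin : volume Q ≠ ⊤ := hQc.measure_lt_top.ne
    refine ENNReal.le_sub_of_add_le_right hQfin ?_
    rw [← hsplit, Set.inter_comm]
    gcongr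
end

section
/- Let C = [0,1]² be the unit square in E^2 and let ε = 1 − 1/√2. Suppose T is a translate of ε·C contained in the interior of C, and suppose the annulus C \ T is covered by finitely many planks P_1, ..., P_n in E^2. Then the sum of the widths of the planks satisfies w(P_1) + ... + w(P_n) ≥ 1. -/
open scoped RealInnerProductSpace

/-- sign of a boolean -/
noncomputable def bsg (b : Bool) : ℝ := if b then 1 else -1

lemma bsg_not (b : Bool) : bsg (!b) = - bsg b := by cases b <;> simp [bsg]
lemma bsg_sq (b : Bool) : bsg b * bsg b = 1 := by cases b <;> simp [bsg]
lemma bsg_abs (b : Bool) : |bsg b| = 1 := by cases b <;> simp [bsg]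

/-- Bang sum -/
noncomputable def bsum {V : Type*} [NormedAddCommGroup V] [InnerProductSpace ℝ V] {n : ℕ}
    (v : Fin n → V) (s : Fin n → Bool) : V := ∑ j, bsg (s j) • v j

/-- Bang functional -/
noncomputable def bfun {V : Type*} [NormedAddCommGroup V] [InnerProductSpace ℝ V] {n : ℕ}
    (v : Fin n → V) (k : Fin n → ℝ) (p : V) (s : Fin n → Bool) : ℝ :=
  ‖p + bsum v s‖ ^ 2 - 2 * ∑ j, bsg (s j) * k j

lemma bang_flip {V : Type*} [NormedAddCommGroup V] [InnerProductSpace ℝ V] {n : ℕ}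
    (v : Fin n → V) (k : Fin n → ℝ) (p : V) (s : Fin n → Bool)
    (h : ∀ s', bfun v k p s' ≤ bfun v k p s) (i : Fin n) :
    ‖v i‖ ^ 2 ≤ bsg (s i) * (⟪p + bsum v s, v i⟫ - k i) := by
  have h1 := h (Function.update s i (!(s i)))
  have hx : bsum v (Function.update s i (!(s i))) = bsum v s - (2 * bsg (s i)) • v i := by
    have : ∀ j, bsg (Function.update s i (!(s i)) j) • v j
        = bsg (s j) • v j - (if j = i then (2 * bsg (s i)) • v i else 0) := by
      intro j
      by_cases hj : j = i
      · subst hj; simp [bsg_not]; module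
      · simp [hj]
    simp only [bsum, this, Finset.sum_sub_distrib, Finset.sum_ite_eq', Finset.mem_univ, if_true]
  have hk : ∑ j, bsg (Function.update s i (!(s i)) j) * k j
      = ∑ j, bsg (s j) * k j - (2 * bsg (s i)) * k i := by
    have : ∀ j, bsg (Function.update s i (!(s i)) j) * k j
        = bsg (s j) * k j - (if j = i then (2 * bsg (s i)) * k i else 0) := by
      intro j
      by_cases hj : j = i
      · subst hj; simp [bsg_not]; ring
      · simp [hj]
    simp only [this, Finset.sum_sub_distrib, Finset.sum_ite_eq', Finset.mem_univ, if_true]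
  unfold bfun at h1
  rw [hx, hk, ← add_sub_assoc, norm_sub_sq_real, inner_smul_right, norm_smul, mul_pow,
    Real.norm_eq_abs, sq_abs] at h1
  have := bsg_sq (s i)
  have e : (2 * bsg (s i)) ^ 2 = 4 := by nlinarith
  rw [e] at h1
  nlinarith

lemma bang_mono {V : Type*} [NormedAddCommGroup V] [InnerProductSpace ℝ V] {n : ℕ}
    (v : Fin n → V) (k : Fin n → ℝ) (p p' : V) (s s' : Fin n → Bool)
    (h : ∀ r, bfun v k p r ≤ bfun v k p s) (h' : ∀ r, bfun v k p' r ≤ bfun v k p' s') :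
    0 ≤ ⟪p' - p, bsum v s' - bsum v s⟫ := by
  have h1 := h s'
  have h2 := h' s
  unfold bfun at h1 h2
  rw [norm_add_sq_real, norm_add_sq_real] at h1 h2
  rw [inner_sub_left, inner_sub_right, inner_sub_right]
  linarith

lemma bang_exists {V : Type*} [NormedAddCommGroup V] [InnerProductSpace ℝ V] {n : ℕ}
    (v : Fin n → V) (k : Fin n → ℝ) (p : V) :
    ∃ s, ∀ r, bfun v k p r ≤ bfun v k p s := Finite.exists_max _

lemma bsum_coord {n : ℕ} (v : Fin n → EuclideanSpace ℝ (Fin 2)) (s : Fin n → Bool) (i : Fin 2) :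
    |bsum v s i| ≤ ∑ j, |v j i| := by
  have : bsum v s i = ∑ j, bsg (s j) * v j i := by simp [bsum]
  rw [this]
  refine (Finset.abs_sum_le_sum_abs _ _).trans (Finset.sum_le_sum fun j _ => ?_)
  rw [abs_mul, bsg_abs, one_mul]

/-- The main step: movement in the direction of coordinate `c`. -/
lemma two_points {n : ℕ} (v : Fin n → EuclideanSpace ℝ (Fin 2)) (k : Fin n → ℝ)
    (hv : ∀ i, ∑ j, |v j i| ≤ 1 / 2) (c : Fin 2) (a : ℝ) (ha : 0 < a)
    (hva : ∑ j, |v j c| ≤ (1 - a) / 2) :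
    ∃ q q' : EuclideanSpace ℝ (Fin 2), (∀ i, 0 ≤ q i ∧ q i ≤ 1) ∧ (∀ i, 0 ≤ q' i ∧ q' i ≤ 1) ∧
      (∀ j, ‖v j‖ ^ 2 ≤ |⟪q, v j⟫ - k j|) ∧ (∀ j, ‖v j‖ ^ 2 ≤ |⟪q', v j⟫ - k j|) ∧
      a ≤ q' c - q c := by
  let o : EuclideanSpace ℝ (Fin 2) := WithLp.toLp 2 (fun _ => (1 / 2 : ℝ))
  let e : EuclideanSpace ℝ (Fin 2) := EuclideanSpace.single c (1 : ℝ)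
  have key : ∀ b : ℝ, |b| ≤ a / 2 → ∃ s, (∀ r, bfun v k (o + b • e) r ≤ bfun v k (o + b • e) s) ∧
      (∀ i, 0 ≤ (o + b • e + bsum v s) i ∧ (o + b • e + bsum v s) i ≤ 1) ∧
      (∀ j, ‖v j‖ ^ 2 ≤ |⟪o + b • e + bsum v s, v j⟫ - k j|) := by
    intro b hb
    obtain ⟨s, hs⟩ := bang_exists v k (o + b • e)
    refine ⟨s, hs, fun i => ?_, fun j => ?_⟩
    · have h1 := bsum_coord v s i
      have h2 := hv i
      rw [abs_le] at h1 hb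
      by_cases hi : i = c
      · subst hi
        simp [o, e]
        constructor <;> linarith
      · simp [o, e, hi]
        constructor <;> linarith
    · refine (bang_flip v k _ s hs j).trans ((le_abs_self _).trans ?_)
      rw [abs_mul, bsg_abs, one_mul]
  obtain ⟨s, h1, h2, h3⟩ := key (-(a / 2)) (by rw [abs_neg, abs_of_pos (by positivity)])
  obtain ⟨s', h1', h2', h3'⟩ := key (a / 2) (by rw [abs_of_pos (by positivity)])
  refine ⟨_, _, h2, h2', h3, h3', ?_⟩
  have h4 := bang_mono v k _ _ s s' h1 h1'
  have h5 : o + (a / 2) • e - (o + (-(a / 2)) • e) = a • e := by module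
  rw [h5, inner_smul_left] at h4
  simp [e, EuclideanSpace.inner_single_left] at h4
  have h6 := nonneg_of_mul_nonneg_right h4 ha
  simp [o, e]
  linarith

/-- **A. Bezdek's annulus theorem for the square.** Let `C = [0,1]²` and
`ε = 1 − 1/√2`. If a translate `T` of `ε·C` lies in the interior of `C` and the annulus
`C \ T` is covered by finitely many planks, then the sum of the widths of the planks is
at least `1`. -/
theorem square_annulus_planks {n : ℕ}
    (C : Set (EuclideanSpace ℝ (Fin 2)))
    (hC : C = {x : EuclideanSpace ℝ (Fin 2) | ∀ i, 0 ≤ x i ∧ x i ≤ 1})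
    (t : EuclideanSpace ℝ (Fin 2))
    (T : Set (EuclideanSpace ℝ (Fin 2)))
    (hT : T = (fun x => t + (1 - 1 / Real.sqrt 2) • x) '' C)
    (hTin : T ⊆ interior C)
    (P : Fin n → Set (EuclideanSpace ℝ (Fin 2))) (w : Fin n → ℝ)
    (hP : ∀ i, IsPlank (P i) (w i))
    (hcover : C \ T ⊆ ⋃ i, P i) :
    1 ≤ ∑ i, w i := by
  by_contra! hS
  choose hw u m hu hPe using hP
  set S := ∑ i, w i with hSdef
  have hS0 : 0 ≤ S := Finset.sum_nonneg fun i _ => (hw i).le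
  obtain ⟨l, hl1, hlS⟩ : ∃ l : ℝ, 1 < l ∧ l * S < 1 := by
    refine ⟨2 / (1 + S), ?_, ?_⟩
    · rw [lt_div_iff₀ (by linarith)]; linarith
    · rw [div_mul_eq_mul_div, div_lt_iff₀ (by linarith)]; linarith
  let v : Fin n → EuclideanSpace ℝ (Fin 2) := fun j => (l * w j / 2) • u j
  have hlw : ∀ j, 0 < l * w j / 2 := fun j => by have := hw j; positivity
  have hu2 : ∀ j, (u j 0) ^ 2 + (u j 1) ^ 2 = 1 := by
    intro j
    have := EuclideanSpace.norm_sq_eq (u j)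
    rw [hu j] at this
    simpa [Fin.sum_univ_two] using this.symm
  have hvabs : ∀ j i, |v j i| = l * w j / 2 * |u j i| := by
    intro j i
    simp only [v, PiLp.smul_apply, smul_eq_mul, abs_mul, abs_of_pos (hlw j)]
  have hsum : ∑ j, l * w j / 2 = l * S / 2 := by
    rw [hSdef, Finset.mul_sum, Finset.sum_div]
  have hv : ∀ i, ∑ j, |v j i| ≤ 1 / 2 := by
    intro i
    calc ∑ j, |v j i| ≤ ∑ j, l * w j / 2 := by
          refine Finset.sum_le_sum fun j _ => ?_
          rw [hvabs]
          have : |u j i| ≤ 1 := by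
            rw [← hu j, ← Real.norm_eq_abs]
            exact PiLp.norm_apply_le (u j) i
          exact mul_le_of_le_one_right (hlw j).le this
      _ ≤ 1 / 2 := by rw [hsum]; linarith
  have hs2 : 0 < Real.sqrt 2 := by positivity
  have hsq : Real.sqrt 2 * Real.sqrt 2 = 2 := Real.mul_self_sqrt (by norm_num)
  have hinv : 1 / Real.sqrt 2 = Real.sqrt 2 / 2 := by field_simp; nlinarith
  have hlt : Real.sqrt 2 < 2 := by nlinarith
  have htot : ∑ j, |v j 0| + ∑ j, |v j 1| < Real.sqrt 2 / 2 := by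
    rw [← Finset.sum_add_distrib]
    calc ∑ j, (|v j 0| + |v j 1|) ≤ ∑ j, (l * w j / 2) * Real.sqrt 2 := by
          refine Finset.sum_le_sum fun j _ => ?_
          rw [hvabs, hvabs, ← mul_add]
          refine mul_le_mul_of_nonneg_left ?_ (hlw j).le
          apply Real.le_sqrt_of_sq_le
          have := hu2 j
          rw [← sq_abs (u j 0), ← sq_abs (u j 1)] at this
          nlinarith [sq_nonneg (|u j 0| - |u j 1|)]
      _ = l * S / 2 * Real.sqrt 2 := by rw [← Finset.sum_mul, hsum]
      _ < _ := by nlinarith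
  obtain ⟨c, hc⟩ : ∃ c : Fin 2, ∑ j, |v j c| < Real.sqrt 2 / 4 := by
    by_contra! h
    linarith [h 0, h 1]
  obtain ⟨q, q', hq, hq', hb, hb', hd⟩ := two_points v (fun j => ⟪m j, v j⟫) hv c
    (1 - 2 * ∑ j, |v j c|) (by linarith) (by linarith)
  have hmem : ∀ x : EuclideanSpace ℝ (Fin 2), (∀ i, 0 ≤ x i ∧ x i ≤ 1) →
      (∀ j, ‖v j‖ ^ 2 ≤ |⟪x, v j⟫ - ⟪m j, v j⟫|) →
      t c ≤ x c ∧ x c ≤ t c + (1 - Real.sqrt 2 / 2) := by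
    intro x hx hxb
    have hxT : x ∈ T := by
      by_contra hxT
      have := hcover ⟨by rw [hC]; exact hx, hxT⟩
      obtain ⟨j, hj⟩ := Set.mem_iUnion.1 this
      rw [hPe j] at hj
      have hj' : |⟪x - m j, u j⟫| ≤ w j / 2 := hj
      have h1 := hxb j
      rw [← inner_sub_left] at h1
      simp only [v] at h1
      rw [norm_smul, hu j, inner_smul_right, abs_mul, Real.norm_eq_abs, mul_one,
        abs_of_pos (hlw j), sq] at h1
      have h2 := le_of_mul_le_mul_left h1 (hlw j)
      have := hw j
      nlinarith
    rw [hT, hC] at hxT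
    obtain ⟨y, hy, rfl⟩ := hxT
    have := hy c
    rw [hinv]
    simp only [PiLp.add_apply, PiLp.smul_apply, smul_eq_mul]
    constructor <;> nlinarith
  have h1 := hmem q hq hb
  have h2 := hmem q' hq' hb'
  linarith
end
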